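/- arXiv:2105.06726 — 3 statements merged into one kernel-verified Lean document; each statement's English description precedes it below -/
import Mathlib

section
/- Fix real exponents q, p, r, γ with 1 < q < p < r and 0 < γ < 1, and fix λ > 0 and c > 0. Then for every real M there exists R > 0 such that: whenever real numbers A > 0, B ≥ 0, C ≥ 0, D ≥ 0 satisfy the Nehari identity A + D = B + λ·C, the bound B ≤ c·A^{(1−γ)/p}, and A ≥ R, one has A/p + D/q − B/(1−γ) − λ·C/r ≥ M. (Abstract form of the coercivity of the energy functional restricted to the Nehari manifold, Proposition 1.) -/
open Real

/-!
On the Nehari manifold, eliminating `λ C = A + D - B` turns the energy into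
`(1/p - 1/r) A + (1/q - 1/r) D - (1/(1-γ) - 1/r) B`. The coefficient of `A` is positive, the `D`
term is nonnegative, and `B` grows at most like a power of `A` with exponent `(1-γ)/p < 1`, so the
term linear in `A` dominates.
-/

open Filter Asymptotics

theorem isLittleO_rpow_rpow_atTop {s t : ℝ} (hst : s < t) :
    (fun x : ℝ ↦ x ^ s) =o[atTop] fun x : ℝ ↦ x ^ t := by
  have ratio_eq : (fun x : ℝ ↦ x ^ (-(t - s))) =ᶠ[atTop] fun x ↦ x ^ s / x ^ t := by
    filter_upwards [eventually_gt_atTop 0] with x hx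
    rw [neg_sub, rpow_sub hx]
  refine isLittleO_of_tendsto' ?_ ((tendsto_rpow_neg_atTop (sub_pos.2 hst)).congr' ratio_eq)
  filter_upwards [eventually_gt_atTop 0] with x hx hxt
  exact absurd hxt (rpow_pos_of_pos hx t).ne'

theorem tendsto_mul_sub_mul_rpow_atTop {a θ : ℝ} (ha : 0 < a) (hθ : θ < 1) (k : ℝ) :
    Tendsto (fun x : ℝ ↦ a * x - k * x ^ θ) atTop atTop := by
  have rpow_isLittleO : (fun x : ℝ ↦ x ^ θ) =o[atTop] fun x : ℝ ↦ x := by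
    simpa only [rpow_one] using isLittleO_rpow_rpow_atTop hθ
  have equivalent_linear : (fun x : ℝ ↦ a * x - k * x ^ θ) ~[atTop] fun x ↦ a * x :=
    IsEquivalent.refl.sub_isLittleO ((rpow_isLittleO.const_mul_left k).const_mul_right ha.ne')
  exact equivalent_linear.symm.tendsto_atTop (tendsto_id.const_mul_atTop ha)

theorem energy_eq_of_nehari_identity {A B D E : ℝ} (nehari : A + D = B + E) (p q s r : ℝ) :
    A / p + D / q - B / s - E / r =
      (p⁻¹ - r⁻¹) * A + (q⁻¹ - r⁻¹) * D - (s⁻¹ - r⁻¹) * B := by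
  obtain rfl : E = A + D - B := by linarith
  ring

theorem sub_le_energy_of_nehari_identity {q r s A B D E K : ℝ} (hq : 0 < q) (hqr : q ≤ r)
    (hs : 0 < s) (hsr : s ≤ r) (hD : 0 ≤ D) (nehari : A + D = B + E) (hBK : B ≤ K) (p : ℝ) :
    (p⁻¹ - r⁻¹) * A - (s⁻¹ - r⁻¹) * K ≤ A / p + D / q - B / s - E / r := by
  have D_term_nonneg : 0 ≤ (q⁻¹ - r⁻¹) * D :=
    mul_nonneg (sub_nonneg.2 (inv_anti₀ hq hqr)) hD
  have B_term_le : (s⁻¹ - r⁻¹) * B ≤ (s⁻¹ - r⁻¹) * K :=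
    mul_le_mul_of_nonneg_left hBK (sub_nonneg.2 (inv_anti₀ hs hsr))
  rw [energy_eq_of_nehari_identity nehari]
  linarith

theorem nehari_coercive_general {q p r γ : ℝ} (hq : 0 < q) (hqr : q ≤ r) (hp : 0 < p)
    (hpr : p < r) (hγp : 1 - γ < p) (hγ1 : γ < 1) (c : ℝ) :
    ∀ M : ℝ, ∃ R > 0, ∀ lam A B C D : ℝ,
      0 ≤ D →
      A + D = B + lam * C →
      B ≤ c * A ^ ((1 - γ) / p) →
      R ≤ A →
      M ≤ A / p + D / q - B / (1 - γ) - lam * C / r := by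
  intro M
  have bound_tendsto := tendsto_mul_sub_mul_rpow_atTop
    (sub_pos.2 (inv_strictAnti₀ hp hpr)) ((div_lt_one hp).2 hγp) (((1 - γ)⁻¹ - r⁻¹) * c)
  obtain ⟨R, hR, hR_pos⟩ := ((eventually_forall_ge_atTop.2
    (bound_tendsto.eventually_ge_atTop M)).and (eventually_gt_atTop 0)).exists
  refine ⟨R, hR_pos, fun lam A B C D hD nehari hB hRA ↦ ?_⟩
  calc
    M ≤ (p⁻¹ - r⁻¹) * A - ((1 - γ)⁻¹ - r⁻¹) * c * A ^ ((1 - γ) / p) := hR A hRA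
    _ = (p⁻¹ - r⁻¹) * A - ((1 - γ)⁻¹ - r⁻¹) * (c * A ^ ((1 - γ) / p)) := by rw [mul_assoc]
    _ ≤ A / p + D / q - B / (1 - γ) - lam * C / r :=
      sub_le_energy_of_nehari_identity hq hqr (sub_pos.2 hγ1) (hγp.trans hpr).le hD nehari hB p

/-- Abstract form of the coercivity of the energy functional restricted to the
Nehari manifold (Proposition 1). -/
theorem nehari_coercive (q p r γ lam c : ℝ)
    (hq : 1 < q) (hqp : q < p) (hpr : p < r)
    (hγ0 : 0 < γ) (hγ1 : γ < 1) (hlam : 0 < lam) (hc : 0 < c) :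
    ∀ M : ℝ, ∃ R > 0, ∀ A B C D : ℝ,
      0 < A → 0 ≤ B → 0 ≤ C → 0 ≤ D →
      A + D = B + lam * C →
      B ≤ c * A ^ ((1 - γ) / p) →
      R ≤ A →
      M ≤ A / p + D / q - B / (1 - γ) - lam * C / r := by
  intro M
  obtain ⟨R, hR_pos, hR⟩ := nehari_coercive_general (q := q) (p := p) (r := r) (γ := γ)
    (by linarith) (by linarith) (by linarith) hpr (by linarith) hγ1 c M
  exact ⟨R, hR_pos, fun A B C D _ _ _ hD ↦ hR lam A B C D hD⟩
end

section
/- Fix real exponents q, p, r, γ with 1 < q < p < r and 0 < γ < 1, and fix λ > 0. If real numbers A > 0, B ≥ 0, C ≥ 0, D ≥ 0 satisfy the Nehari identity A + D = B + λ·C and the strict inequality (p+γ−1)·A + (q+γ−1)·D > λ·(r+γ−1)·C, then A/p + D/q − B/(1−γ) − λ·C/r < 0. (Abstract form of Proposition 2: the energy functional is strictly negative on the component N_λ⁺ of the Nehari manifold, hence m_λ⁺ = inf over N_λ⁺ of the energy is negative whenever N_λ⁺ is nonempty.) -/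
open Real

/-!
Put `s = 1 - γ` and `E = lam * C`. Eliminating `B` by the Nehari identity turns each energy term
`x / t` into `x / t - x / s = -((t - s) * x / t) / s`, so negativity of the energy is the `N_λ⁺`
inequality with every term divided by its own exponent. This weighting preserves the inequality:
divide it by the largest exponent `r`, then lower the denominators `r` to `p` and `q` under the
nonnegative terms on the larger side.
-/

section Field

variable {K : Type*} [Field K]

theorem energy_eq_of_nehari {p q r s A B D E : K} (hp : p ≠ 0) (hq : q ≠ 0) (hr : r ≠ 0)
    (hs : s ≠ 0) (nehari : A + D = B + E) :
    A / p + D / q - B / s - E / r =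
      ((r - s) * E / r - ((p - s) * A / p + (q - s) * D / q)) / s := by
  obtain rfl : B = A + D - E := eq_sub_of_add_eq nehari.symm
  field_simp
  ring

variable [LinearOrder K] [IsStrictOrderedRing K]

theorem energy_neg_iff_of_nehari {p q r s A B D E : K} (hp : p ≠ 0) (hq : q ≠ 0) (hr : r ≠ 0)
    (hs : 0 < s) (nehari : A + D = B + E) :
    A / p + D / q - B / s - E / r < 0 ↔
      (r - s) * E / r < (p - s) * A / p + (q - s) * D / q := by
  rw [energy_eq_of_nehari hp hq hr hs.ne' nehari, div_lt_iff₀ hs, zero_mul,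
    sub_neg]

theorem div_lt_div_add_div_of_lt_add {p q r a b c : K} (hp : 0 < p) (hq : 0 < q) (hpr : p ≤ r)
    (hqr : q ≤ r) (ha : 0 ≤ a) (hb : 0 ≤ b) (h : c < a + b) : c / r < a / p + b / q :=
  calc
    c / r < (a + b) / r := div_lt_div_of_pos_right h (hp.trans_le hpr)
    _ = a / r + b / r := add_div a b r
    _ ≤ a / p + b / q := by gcongr

theorem energy_neg_on_Nplus_general {q p r γ lam A B C D : K} (hγ : γ < 1) (hp : 1 - γ ≤ p)
    (hq : 1 - γ ≤ q) (hpr : p ≤ r) (hqr : q ≤ r) (hA : 0 ≤ A) (hD : 0 ≤ D)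
    (hnehari : A + D = B + lam * C)
    (hplus : lam * ((r + γ - 1) * C) < (p + γ - 1) * A + (q + γ - 1) * D) :
    A / p + D / q - B / (1 - γ) - lam * C / r < 0 := by
  have hs : 0 < 1 - γ := sub_pos.2 hγ
  have hp₀ : 0 < p := hs.trans_le hp
  have hq₀ : 0 < q := hs.trans_le hq
  have hr₀ : 0 < r := hp₀.trans_le hpr
  have nplus : (r - (1 - γ)) * (lam * C) < (p - (1 - γ)) * A + (q - (1 - γ)) * D := by
    linear_combination hplus
  rw [energy_neg_iff_of_nehari hp₀.ne' hq₀.ne' hr₀.ne' hs hnehari]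
  exact div_lt_div_add_div_of_lt_add hp₀ hq₀ hpr hqr
    (mul_nonneg (sub_nonneg.2 hp) hA) (mul_nonneg (sub_nonneg.2 hq) hD) nplus

end Field

/-- Abstract form of Proposition 2: the energy functional is strictly negative on
the component `N_λ⁺` of the Nehari manifold. -/
theorem energy_neg_on_Nplus (q p r γ lam : ℝ)
    (hq : 1 < q) (hqp : q < p) (hpr : p < r)
    (hγ0 : 0 < γ) (hγ1 : γ < 1) (hlam : 0 < lam)
    (A B C D : ℝ) (hA : 0 < A) (hB : 0 ≤ B) (hC : 0 ≤ C) (hD : 0 ≤ D)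
    (hnehari : A + D = B + lam * C)
    (hplus : (p + γ - 1) * A + (q + γ - 1) * D > lam * ((r + γ - 1) * C)) :
    A / p + D / q - B / (1 - γ) - lam * C / r < 0 :=
  energy_neg_on_Nplus_general hγ1 (by linarith) (by linarith) hpr.le (hqp.trans hpr).le
    hA.le hD hnehari hplus
end

section
/- Fix real exponents q, p, r, γ with 1 < q < p < r and 0 < γ < 1, λ > 0, and c₉ > 0. If reals A > 0, B ≥ 0, C > 0, D ≥ 0 satisfy the Nehari identity A + D = B + λ·C, the strict energy inequality A/p + D/q − B/(1−γ) − λ·C/r < 0, and the bound B ≤ c₉·C^{(1−γ)/r}, then C^{(r+γ−1)/r} ≤ ((p+γ−1)·r·c₉) / (λ·(r−p)·(1−γ)). (Abstract form of estimate (26): a negative-energy point of the Nehari manifold has L^r-norm bounded above by a constant times λ^{−1/(r+γ−1)}.) -/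
open Real

/-!
On the Nehari manifold the `p`-gradient term can be eliminated from the energy. Since `q ≤ p`, the
`q`-gradient term that remains has a nonnegative coefficient, so with `s = 1 - γ` nonpositive energy
forces `(1/p - 1/r) λ‖u‖_r^r ≤ (1/s - 1/p) ∫ a|u|^s`. By Hölder the right-hand side is at most a
multiple of `‖u‖_r^s`, and because `s < r` this bounds `‖u‖_r`.
-/

section

variable {q p r s lam c A B C D : ℝ}

theorem le_energy_of_nehari (hq : 0 < q) (hqp : q ≤ p) (hD : 0 ≤ D)
    (hnehari : A + D = B + lam * C) :
    (1 / p - 1 / r) * (lam * C) - (1 / s - 1 / p) * B ≤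
      A / p + D / q - B / s - lam * C / r := by
  have hDpq : D / p ≤ D / q := div_le_div_of_nonneg_left hD hq hqp
  calc (1 / p - 1 / r) * (lam * C) - (1 / s - 1 / p) * B
      = (B + lam * C) / p - B / s - lam * C / r := by ring
    _ = A / p + D / p - B / s - lam * C / r := by rw [← hnehari, add_div]
    _ ≤ A / p + D / q - B / s - lam * C / r := by gcongr

theorem mul_le_mul_of_nehari_of_energy_nonpos (hq : 0 < q) (hqp : q ≤ p) (hr : 0 < r) (hs : 0 < s)
    (hD : 0 ≤ D) (hnehari : A + D = B + lam * C)
    (henergy : A / p + D / q - B / s - lam * C / r ≤ 0) :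
    lam * (r - p) * s * C ≤ (p - s) * r * B := by
  have hp : 0 < p := hq.trans_le hqp
  have hcoeff : (1 / p - 1 / r) * (lam * C) ≤ (1 / s - 1 / p) * B :=
    sub_nonpos.mp ((le_energy_of_nehari hq hqp hD hnehari).trans henergy)
  calc lam * (r - p) * s * C
      = p * r * s * ((1 / p - 1 / r) * (lam * C)) := by field_simp
    _ ≤ p * r * s * ((1 / s - 1 / p) * B) := by gcongr
    _ = (p - s) * r * B := by field_simp

theorem rpow_one_sub_le_div_of_mul_le_mul_rpow {x k c θ : ℝ} (hx : 0 < x) (hk : 0 < k)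
    (h : k * x ≤ c * x ^ θ) : x ^ (1 - θ) ≤ c / k := by
  rw [rpow_sub hx, rpow_one, div_le_div_iff₀ (rpow_pos_of_pos hx θ) hk, mul_comm x]
  exact h

theorem negative_energy_upper_bound_general (hq : 0 < q) (hqp : q ≤ p) (hpr : p < r)
    (hs : 0 < s) (hsp : s ≤ p) (hlam : 0 < lam) (hC : 0 < C) (hD : 0 ≤ D)
    (hnehari : A + D = B + lam * C)
    (henergy : A / p + D / q - B / s - lam * C / r ≤ 0)
    (hhold : B ≤ c * C ^ (s / r)) :
    C ^ ((r - s) / r) ≤ (p - s) * r * c / (lam * (r - p) * s) := by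
  have hr : 0 < r := (hq.trans_le hqp).trans hpr
  have hden : 0 < lam * (r - p) * s := mul_pos (mul_pos hlam (sub_pos.mpr hpr)) hs
  have hgrowth : lam * (r - p) * s * C ≤ (p - s) * r * c * C ^ (s / r) :=
    calc lam * (r - p) * s * C
        ≤ (p - s) * r * B :=
          mul_le_mul_of_nehari_of_energy_nonpos hq hqp hr hs hD hnehari henergy
      _ ≤ (p - s) * r * (c * C ^ (s / r)) :=
          mul_le_mul_of_nonneg_left hhold (mul_nonneg (sub_nonneg.mpr hsp) hr.le)
      _ = (p - s) * r * c * C ^ (s / r) := (mul_assoc _ _ _).symm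
  rw [← one_sub_div hr.ne']
  exact rpow_one_sub_le_div_of_mul_le_mul_rpow hC hden hgrowth

end

/-- Abstract form of estimate (26): a negative-energy point of the Nehari
manifold has `L^r`-norm bounded above by a constant times `λ^{−1/(r+γ−1)}`. -/
theorem negative_energy_upper_bound (q p r γ lam c₉ : ℝ)
    (hq : 1 < q) (hqp : q < p) (hpr : p < r)
    (hγ0 : 0 < γ) (hγ1 : γ < 1) (hlam : 0 < lam) (hc₉ : 0 < c₉)
    (A B C D : ℝ) (hA : 0 < A) (hB : 0 ≤ B) (hC : 0 < C) (hD : 0 ≤ D)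
    (hnehari : A + D = B + lam * C)
    (henergy : A / p + D / q - B / (1 - γ) - lam * C / r < 0)
    (hhold : B ≤ c₉ * C ^ ((1 - γ) / r)) :
    C ^ ((r + γ - 1) / r) ≤ (p + γ - 1) * r * c₉ / (lam * (r - p) * (1 - γ)) := by
  simpa only [sub_sub_eq_add_sub] using negative_energy_upper_bound_general (by linarith) hqp.le hpr
    (sub_pos.mpr hγ1) (by linarith) hlam hC hD hnehari henergy.le hhold
end
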